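/- For the seven-qubit state |ψ⟩₇ with equal coefficients α₁ = α₂ = α₃ = α₄ = 1/2, the 3×3 matrix R†R equals diag(10, 10, 5); consequently, with u₁² ≥ u₂² ≥ u₃² its eigenvalues, the upper bound of the maximum violation of Bell's inequality 2√(u₁² + u₂²) equals 4√5. -/

import Mathlib

/-!
Write `ψ = ½ ∑ₐ |W a⟩` with the four bit strings `W a` (`bitString a`). Then
`Tr (ρ · K) = ¼ ∑_{a,b} K (W b) (W a)`, which is real for a Kronecker product `K` of Pauli
matrices since `K` is Hermitian; so the real part in the definition of `R` loses nothing, and `R`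
may be treated as a complex matrix.

The sum over `I ∈ {1,2,3}⁶` in `R†R` then factors over the six qubits by distributivity, and each
factor is given by the swap identity
`∑ᵢ σᵢ(p,q) σᵢ(r,s) = 2 δ_{ps} δ_{qr} - δ_{pq} δ_{rs}`.
What remains is a sum of `4⁴` Gaussian integers for each entry `(j, j')`, evaluated by the kernel.
The eigenvalues are then read off from the characteristic polynomial `(X - 10)² (X - 5)`.
-/

open Matrix Complex Polynomial
open scoped ComplexOrder

noncomputable section

/-- The three Pauli matrices σ_x, σ_y, σ_z. -/
def pauli : Fin 3 → Matrix (Fin 2) (Fin 2) ℂ :=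
  ![!![0, 1; 1, 0], !![0, -Complex.I; Complex.I, 0], !![1, 0; 0, -1]]

/-- Kronecker product of `n` 2×2 matrices, as a matrix on `(Fin n → Fin 2)`. -/
def kron {n : ℕ} (M : Fin n → Matrix (Fin 2) (Fin 2) ℂ) :
    Matrix (Fin n → Fin 2) (Fin n → Fin 2) ℂ :=
  Matrix.of fun f g => ∏ k, M k (f k) (g k)

/-- The bit string 0000000. -/
def w₁ : Fin 7 → Fin 2 := ![0, 0, 0, 0, 0, 0, 0]
/-- The bit string 0001111. -/
def w₂ : Fin 7 → Fin 2 := ![0, 0, 0, 1, 1, 1, 1]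
/-- The bit string 1111000. -/
def w₃ : Fin 7 → Fin 2 := ![1, 1, 1, 1, 0, 0, 0]
/-- The bit string 1110111. -/
def w₄ : Fin 7 → Fin 2 := ![1, 1, 1, 0, 1, 1, 1]

/-- The seven-qubit state `|ψ⟩₇ = α₁|0000000⟩ + α₂|0001111⟩ + α₃|1111000⟩ + α₄|1110111⟩`. -/
def psi7 (α₁ α₂ α₃ α₄ : ℝ) : (Fin 7 → Fin 2) → ℂ := fun f =>
  (if f = w₁ then (α₁ : ℂ) else 0) + (if f = w₂ then (α₂ : ℂ) else 0)
    + (if f = w₃ then (α₃ : ℂ) else 0) + (if f = w₄ then (α₄ : ℂ) else 0)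

/-- The density matrix `ρ(f,g) = ψ(f)·conj(ψ(g))` of `|ψ⟩₇`. -/
def rho7 (α₁ α₂ α₃ α₄ : ℝ) : Matrix (Fin 7 → Fin 2) (Fin 7 → Fin 2) ℂ :=
  Matrix.of fun f g => psi7 α₁ α₂ α₃ α₄ f * (starRingEnd ℂ) (psi7 α₁ α₂ α₃ α₄ g)

/-- The reduced density matrix of region `A` (the seventh qubit): partial trace of
`ρ` over the first six qubits. -/
def rhoA7 (α₁ α₂ α₃ α₄ : ℝ) : Matrix (Fin 2) (Fin 2) ℂ :=
  Matrix.of fun a a' =>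
    ∑ b : Fin 6 → Fin 2, rho7 α₁ α₂ α₃ α₄ (Fin.snoc b a) (Fin.snoc b a')

/-- The generalized R-matrix of `ρ = |ψ⟩₇⟨ψ|₇`:
`R(I, j) = Re Tr(ρ · σ_{i₁}⊗⋯⊗σ_{i₆}⊗σ_j)`. -/
def Rmat7 (α₁ α₂ α₃ α₄ : ℝ) (I : Fin 6 → Fin 3) (j : Fin 3) : ℝ :=
  (Matrix.trace (rho7 α₁ α₂ α₃ α₄ *
    kron (Fin.snoc (fun k : Fin 6 => pauli (I k)) (pauli j)))).re

/-- The 3×3 matrix `R†R`. -/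
def RtR7 (α₁ α₂ α₃ α₄ : ℝ) : Matrix (Fin 3) (Fin 3) ℝ :=
  Matrix.of fun j j' =>
    ∑ I : Fin 6 → Fin 3, Rmat7 α₁ α₂ α₃ α₄ I j * Rmat7 α₁ α₂ α₃ α₄ I j'

/-- The four bit strings in the support of `|ψ⟩₇`. -/
def bitString : Fin 4 → Fin 7 → Fin 2 := ![w₁, w₂, w₃, w₄]

/-- The integer `2 δ_{ps} δ_{qr} - δ_{pq} δ_{rs}`, an entry of `2 · SWAP - 1`. -/
def swapEntry (p q r s : Fin 2) : ℤ :=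
  2 * (if p = s ∧ q = r then 1 else 0) - (if p = q ∧ r = s then 1 else 0)

/-- The Pauli matrices with Gaussian integer entries, on which arithmetic is decidable. -/
def pauliGauss : Fin 3 → Matrix (Fin 2) (Fin 2) GaussianInt :=
  ![!![0, 1; 1, 0], !![0, ⟨0, -1⟩; ⟨0, 1⟩, 0], !![1, 0; 0, -1]]

/-- The expectation value `Tr (ρ · σ_{i₁}⊗⋯⊗σ_{i₆}⊗σ_j)` at equal amplitudes, before taking real
parts. -/
def corr (I : Fin 6 → Fin 3) (j : Fin 3) : ℂ :=
  1 / 4 * ∑ a, ∑ b, (∏ k : Fin 6, pauli (I k) (bitString b k.castSucc) (bitString a k.castSucc)) *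
    pauli j (bitString b (Fin.last 6)) (bitString a (Fin.last 6))

lemma psi7_half (f : Fin 7 → Fin 2) :
    psi7 (1/2) (1/2) (1/2) (1/2) f = ∑ a, if f = bitString a then (1 / 2 : ℂ) else 0 := by
  rw [Fin.sum_univ_four]
  norm_num [psi7, bitString]
  rfl

lemma trace_rho7_mul (K : Matrix (Fin 7 → Fin 2) (Fin 7 → Fin 2) ℂ) :
    Matrix.trace (rho7 (1/2) (1/2) (1/2) (1/2) * K) =
      1 / 4 * ∑ a, ∑ b, K (bitString b) (bitString a) := by
  have key (F : (Fin 7 → Fin 2) → ℂ) :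
      ∑ f, psi7 (1/2) (1/2) (1/2) (1/2) f * F f = 1 / 2 * ∑ a, F (bitString a) := by
    simp only [psi7_half, Finset.sum_mul, Finset.mul_sum]
    rw [Finset.sum_comm]
    simp
  have hconj (f : Fin 7 → Fin 2) : (starRingEnd ℂ) (psi7 (1/2) (1/2) (1/2) (1/2) f) =
      psi7 (1/2) (1/2) (1/2) (1/2) f := by
    simp only [psi7, map_add, apply_ite (starRingEnd ℂ), Complex.conj_ofReal, map_zero]
  simp only [Matrix.trace, Matrix.diag, Matrix.mul_apply, rho7, Matrix.of_apply, hconj,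
    mul_assoc, ← Finset.mul_sum, key]
  ring

lemma pauli_conj (i : Fin 3) (p q : Fin 2) : (starRingEnd ℂ) (pauli i p q) = pauli i q p := by
  fin_cases i <;> fin_cases p <;> fin_cases q <;> simp [pauli]

lemma sum_pauli_mul_pauli (p q r s : Fin 2) :
    ∑ i, pauli i p q * pauli i r s = (swapEntry p q r s : ℂ) := by
  rw [Fin.sum_univ_three]
  fin_cases p <;> fin_cases q <;> fin_cases r <;> fin_cases s <;>
    simp [pauli, swapEntry] <;> norm_num

lemma pauli_eq_toComplex (i : Fin 3) (p q : Fin 2) :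
    pauli i p q = GaussianInt.toComplex (pauliGauss i p q) := by
  fin_cases i <;> fin_cases p <;> fin_cases q <;>
    simp [pauli, pauliGauss, GaussianInt.toComplex_def]

lemma corr_conj (I : Fin 6 → Fin 3) (j : Fin 3) : (starRingEnd ℂ) (corr I j) = corr I j := by
  simp only [corr, map_mul, map_sum, map_prod, pauli_conj]
  -- Conjugation transposes each Pauli matrix, which exchanges the two bit strings.
  rw [Finset.sum_comm, map_div₀, map_one, Complex.conj_ofNat]

lemma Rmat7_eq_corr (I : Fin 6 → Fin 3) (j : Fin 3) :
    (Rmat7 (1/2) (1/2) (1/2) (1/2) I j : ℂ) = corr I j := by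
  have h : Matrix.trace (rho7 (1/2) (1/2) (1/2) (1/2) *
      kron (Fin.snoc (fun k : Fin 6 => pauli (I k)) (pauli j))) = corr I j := by
    rw [trace_rho7_mul]
    simp only [corr, kron, Matrix.of_apply, Fin.prod_univ_castSucc (n := 6), Fin.snoc_castSucc,
      Fin.snoc_last]
  rw [Rmat7, h]
  exact Complex.conj_eq_iff_re.mp (corr_conj I j)

/-- An entry of `R†R` as a sum of Gaussian integers: by distributivity the sum over all six-fold
Pauli products is a product over the qubits, to which the swap identity applies. -/
lemma sum_corr_mul_corr (j j' : Fin 3) :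
    ∑ I, corr I j * corr I j' =
      1 / 16 * GaussianInt.toComplex (∑ a, ∑ b, ∑ c, ∑ d,
        ((∏ k : Fin 6, swapEntry (bitString b k.castSucc) (bitString a k.castSucc)
          (bitString d k.castSucc) (bitString c k.castSucc) : ℤ) : GaussianInt) *
        (pauliGauss j (bitString b (Fin.last 6)) (bitString a (Fin.last 6)) *
          pauliGauss j' (bitString d (Fin.last 6)) (bitString c (Fin.last 6)))) := by
  have hprod (a b c d : Fin 4) :
      ∑ I : Fin 6 → Fin 3,
        (∏ k : Fin 6, pauli (I k) (bitString b k.castSucc) (bitString a k.castSucc)) *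
        (∏ k : Fin 6, pauli (I k) (bitString d k.castSucc) (bitString c k.castSucc)) =
      ∏ k : Fin 6, (swapEntry (bitString b k.castSucc) (bitString a k.castSucc)
          (bitString d k.castSucc) (bitString c k.castSucc) : ℂ) := by
    simp only [← Finset.prod_mul_distrib, ← sum_pauli_mul_pauli]
    rw [Finset.prod_univ_sum, Fintype.piFinset_univ]
  simp only [map_sum, map_mul, map_intCast, Int.cast_prod, map_prod, ← pauli_eq_toComplex, ← hprod]
  -- Expanding in this order leaves the sums over the strings of the `j` factor outermost.
  rw [Finset.sum_congr rfl fun I _ => mul_comm (corr I j) (corr I j')]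
  simp only [corr, Finset.mul_sum, Finset.sum_mul]
  rw [Finset.sum_comm]
  refine Finset.sum_congr rfl fun a _ => ?_
  rw [Finset.sum_comm]
  refine Finset.sum_congr rfl fun b _ => ?_
  rw [Finset.sum_comm]
  refine Finset.sum_congr rfl fun c _ => ?_
  rw [Finset.sum_comm]
  refine Finset.sum_congr rfl fun d _ => Finset.sum_congr rfl fun I _ => ?_
  ring

lemma gauss_sum (j j' : Fin 3) :
    (∑ a, ∑ b, ∑ c, ∑ d,
        ((∏ k : Fin 6, swapEntry (bitString b k.castSucc) (bitString a k.castSucc)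
          (bitString d k.castSucc) (bitString c k.castSucc) : ℤ) : GaussianInt) *
        (pauliGauss j (bitString b (Fin.last 6)) (bitString a (Fin.last 6)) *
          pauliGauss j' (bitString d (Fin.last 6)) (bitString c (Fin.last 6)))) =
      ((!![160, 0, 0; 0, 160, 0; 0, 0, 80] : Matrix (Fin 3) (Fin 3) ℤ) j j' : GaussianInt) := by
  revert j j'
  decide +kernel

lemma RtR7_half : RtR7 (1/2) (1/2) (1/2) (1/2) = !![10, 0, 0; 0, 10, 0; 0, 0, 5] := by
  ext j j'
  have h : (RtR7 (1/2) (1/2) (1/2) (1/2) j j' : ℂ) = 1 / 16 *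
      ((!![160, 0, 0; 0, 160, 0; 0, 0, 80] : Matrix (Fin 3) (Fin 3) ℤ) j j' : ℂ) := by
    simp only [RtR7, Matrix.of_apply, Complex.ofReal_sum, Complex.ofReal_mul, Rmat7_eq_corr,
      sum_corr_mul_corr, gauss_sum, map_intCast]
  apply Complex.ofReal_injective
  rw [h]
  fin_cases j <;> fin_cases j' <;> norm_num

/-- For the seven-qubit state `|ψ⟩₇` with equal coefficients `α₁=α₂=α₃=α₄=1/2`,
`R†R = diag(10, 10, 5)`; consequently, with `u₁² ≥ u₂² ≥ u₃²` its eigenvalues, the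
upper bound `2√(u₁² + u₂²)` of the maximum violation of Bell's inequality is `4√5`. -/
theorem RtR7_equal_amplitudes :
    RtR7 (1/2) (1/2) (1/2) (1/2) = !![10, 0, 0; 0, 10, 0; 0, 0, 5] ∧
    ∀ u₁sq u₂sq u₃sq : ℝ, u₂sq ≤ u₁sq → u₃sq ≤ u₂sq →
      (RtR7 (1/2) (1/2) (1/2) (1/2)).charpoly =
        (X - C u₁sq) * (X - C u₂sq) * (X - C u₃sq) →
      2 * Real.sqrt (u₁sq + u₂sq) = 4 * Real.sqrt 5 := by
  refine ⟨RtR7_half, fun u v w huv hvw h => ?_⟩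
  have hx (x : ℝ) : (x - 10) * (x - 10) * (x - 5) = (x - u) * (x - v) * (x - w) := by
    have := congrArg (Polynomial.eval x) h
    rw [RtR7_half, Matrix.eval_charpoly] at this
    simpa [Matrix.det_fin_three] using this
  -- The values at 10 and 5 give the two distinct roots, the value at 0 the remaining one.
  have hsum : u + v = 20 := by
    have h10 := hx 10
    have h5 := hx 5
    have h0 := hx 0
    simp only [sub_self, zero_mul, mul_zero, zero_eq_mul, mul_eq_zero, sub_eq_zero] at h10 h5
    rcases h10 with (rfl | rfl) | rfl <;> rcases h5 with (h5 | h5) | h5 <;> subst_vars <;> linarith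
  have hs : Real.sqrt 20 = 2 * Real.sqrt 5 := by
    rw [show (20 : ℝ) = 2 ^ 2 * 5 by norm_num, Real.sqrt_mul (by norm_num),
      Real.sqrt_sq (by norm_num)]
  rw [hsum, hs]
  ring
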